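/- Let n = 4, let α_1, α_2, α_3, α_4 ∈ ℝ (indices mod 4) satisfy sin(α_{j+1} − α_j) ≠ 0 for all j, let P_θ be the associated 4×4 perpendicular-bisector evolute matrix, and let C, S ∈ ℝ⁴ be given by C_j = cos α_j, S_j = sin α_j. Then there exists λ ∈ ℝ such that for every p ∈ ℝ⁴, P_θ²·p − λ·p ∈ span{C, S}. Geometrically: the second perpendicular-bisector evolute of any quadrilateral is homothetic to the quadrilateral itself, with ratio depending only on the angles. -/

import Mathlib

open Real

/-- The perpendicular-bisector evolute matrix `P_θ` associated with the cyclic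
sequence of normal angles `α`. -/
noncomputable def Pmat (n : ℕ) [NeZero n] (α : Fin n → ℝ) : Matrix (Fin n) (Fin n) ℝ :=
  Matrix.of fun j k =>
    if k = j then
      (Real.cos (α j - α (j - 1)) / Real.sin (α j - α (j - 1)) -
        Real.cos (α (j + 1) - α j) / Real.sin (α (j + 1) - α j)) / 2
    else if k = j + 1 then 1 / (2 * Real.sin (α (j + 1) - α j))
    else if k = j - 1 then -(1 / (2 * Real.sin (α j - α (j - 1))))
    else 0

open Matrix in
/-- Abstract version: a traceless `4×4` matrix rotating the plane `span{C,S}` squares to a scalar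
modulo that plane. -/
theorem aux_abstract (P : Matrix (Fin 4) (Fin 4) ℝ) (C S : Fin 4 → ℝ)
    (hD : C 0 * S 1 - C 1 * S 0 ≠ 0)
    (hPC : ∀ j, P j 0 * C 0 + P j 1 * C 1 + P j 2 * C 2 + P j 3 * C 3 = - S j)
    (hPS : ∀ j, P j 0 * S 0 + P j 1 * S 1 + P j 2 * S 2 + P j 3 * S 3 = C j)
    (htr : P 0 0 + P 1 1 + P 2 2 + P 3 3 = 0) :
    ∃ lam : ℝ, ∀ p : Fin 4 → ℝ,
      P.mulVec (P.mulVec p) - lam • p ∈ Submodule.span ℝ ({C, S} : Set (Fin 4 → ℝ)) := by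
  obtain ⟨D, hDd⟩ : ∃ D, D = C 0 * S 1 - C 1 * S 0 := ⟨_, rfl⟩
  rw [← hDd] at hD
  let f : Fin 4 → (Fin 4 → ℝ) → ℝ := fun i q =>
    D * q i - q 0 * (S 1 * C i - C 1 * S i) - q 1 * (C 0 * S i - S 0 * C i)
  have hf : ∀ i q, f i q =
    D * q i - q 0 * (S 1 * C i - C 1 * S i) - q 1 * (C 0 * S i - S 0 * C i) := fun _ _ => rfl
  let g : Fin 4 → Fin 4 → ℝ := fun i k => f i (fun j => P j k)
  have hg : ∀ i k, g i k = D * P i k - P 0 k * (S 1 * C i - C 1 * S i)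
    - P 1 k * (C 0 * S i - S 0 * C i) := fun _ _ => rfl
  clear_value g f
  have hmul : ∀ (q : Fin 4 → ℝ) j,
      P.mulVec q j = P j 0 * q 0 + P j 1 * q 1 + P j 2 * q 2 + P j 3 * q 3 := by
    intro q j
    simp [Matrix.mulVec, dotProduct, Fin.sum_univ_four]
  have hrow : ∀ (q : Fin 4 → ℝ) j, D * P.mulVec q j = f 2 q * P j 2 + f 3 q * P j 3
      - (q 0 * S 1 - q 1 * S 0) * S j + (C 0 * q 1 - C 1 * q 0) * C j := by
    intro q j
    rw [hmul, hf, hf]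
    linear_combination (q 0 * S 1 - q 1 * S 0) * hPC j + (C 0 * q 1 - C 1 * q 0) * hPS j
      + (P j 0 * q 0 + P j 1 * q 1) * hDd
  have hK : ∀ (q : Fin 4 → ℝ) i, D * f i (P.mulVec q) = g i 2 * f 2 q + g i 3 * f 3 q := by
    intro q i
    rw [hf i, hg, hg]
    have h0 := hrow q 0
    have h1 := hrow q 1
    have hi := hrow q i
    linear_combination D * hi - (S 1 * C i - C 1 * S i) * h0 - (C 0 * S i - S 0 * C i) * h1
      + (-(q 0 * S 1 - q 1 * S 0) * S i + (C 0 * q 1 - C 1 * q 0) * C i) * hDd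
  have hgt : g 2 2 + g 3 3 = 0 := by
    rw [hg, hg]
    linear_combination D * htr - S 1 * hPC 0 + C 1 * hPS 0 - C 0 * hPS 1 + S 0 * hPC 1
      - (P 0 0 + P 1 1) * hDd
  refine ⟨(g 2 2 * g 2 2 + g 2 3 * g 3 2) / D ^ 2, fun p => ?_⟩
  set lam := (g 2 2 * g 2 2 + g 2 3 * g 3 2) / D ^ 2 with hlam
  have hl : lam * D ^ 2 = g 2 2 * g 2 2 + g 2 3 * g 3 2 := by
    rw [hlam]; field_simp
  clear_value lam
  have hk2 := hK p 2
  have hk3 := hK p 3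
  have hkk2 := hK (P.mulVec p) 2
  have hkk3 := hK (P.mulVec p) 3
  have e2 : f 2 (P.mulVec (P.mulVec p) - lam • p) = 0 := by
    have : f 2 (P.mulVec (P.mulVec p) - lam • p) = f 2 (P.mulVec (P.mulVec p)) - lam * f 2 p := by
      simp only [hf, Pi.sub_apply, Pi.smul_apply, smul_eq_mul]; ring
    rw [this]
    apply mul_left_cancel₀ (pow_ne_zero 2 hD)
    linear_combination D * hkk2 + g 2 2 * hk2 + g 2 3 * hk3 - f 2 p * hl + g 2 3 * f 3 p * hgt
  have e3 : f 3 (P.mulVec (P.mulVec p) - lam • p) = 0 := by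
    have : f 3 (P.mulVec (P.mulVec p) - lam • p) = f 3 (P.mulVec (P.mulVec p)) - lam * f 3 p := by
      simp only [hf, Pi.sub_apply, Pi.smul_apply, smul_eq_mul]; ring
    rw [this]
    apply mul_left_cancel₀ (pow_ne_zero 2 hD)
    linear_combination D * hkk3 + g 3 2 * hk2 + g 3 3 * hk3 - f 3 p * hl + g 3 2 * f 2 p * hgt
      + (g 3 3 - g 2 2) * f 3 p * hgt
  generalize P.mulVec (P.mulVec p) - lam • p = q at e2 e3
  rw [hf] at e2 e3
  rw [Submodule.mem_span_pair]
  refine ⟨(q 0 * S 1 - q 1 * S 0) / D, (C 0 * q 1 - C 1 * q 0) / D, ?_⟩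
  ext j
  simp only [Pi.add_apply, Pi.smul_apply, smul_eq_mul]
  apply mul_left_cancel₀ hD
  have : D * ((q 0 * S 1 - q 1 * S 0) / D * C j + (C 0 * q 1 - C 1 * q 0) / D * S j) =
    (q 0 * S 1 - q 1 * S 0) * C j + (C 0 * q 1 - C 1 * q 0) * S j := by field_simp
  rw [this]
  fin_cases j
  · simp; linear_combination - q 0 * hDd
  · simp; linear_combination - q 1 * hDd
  · simp; linear_combination - e2
  · simp; linear_combination - e3

/-- Row identity for the cosine vector. -/
theorem aux_cos (a b c : ℝ) (h1 : Real.sin (b - a) ≠ 0) (h2 : Real.sin (c - b) ≠ 0) :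
    -(1 / (2 * Real.sin (b - a))) * Real.cos a
      + (Real.cos (b - a) / Real.sin (b - a) - Real.cos (c - b) / Real.sin (c - b)) / 2 * Real.cos b
      + 1 / (2 * Real.sin (c - b)) * Real.cos c = - Real.sin b := by
  have ha : Real.cos a = Real.cos b * Real.cos (b - a) + Real.sin b * Real.sin (b - a) := by
    rw [← Real.cos_sub]; congr 1; ring
  have hc : Real.cos c = Real.cos b * Real.cos (c - b) - Real.sin b * Real.sin (c - b) := by
    rw [← Real.cos_add]; congr 1; ring
  rw [ha, hc]
  field_simp
  ring

/-- Row identity for the sine vector. -/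
theorem aux_sin (a b c : ℝ) (h1 : Real.sin (b - a) ≠ 0) (h2 : Real.sin (c - b) ≠ 0) :
    -(1 / (2 * Real.sin (b - a))) * Real.sin a
      + (Real.cos (b - a) / Real.sin (b - a) - Real.cos (c - b) / Real.sin (c - b)) / 2 * Real.sin b
      + 1 / (2 * Real.sin (c - b)) * Real.sin c = Real.cos b := by
  have ha : Real.sin a = Real.sin b * Real.cos (b - a) - Real.cos b * Real.sin (b - a) := by
    rw [← Real.sin_sub]; congr 1; ring
  have hc : Real.sin c = Real.sin b * Real.cos (c - b) + Real.cos b * Real.sin (c - b) := by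
    rw [← Real.sin_add]; congr 1; ring
  rw [ha, hc]
  field_simp
  ring

/-- The second perpendicular-bisector evolute of any quadrilateral
is homothetic to the quadrilateral: there is `λ ∈ ℝ` (depending only on the angles)
such that `P_θ² p − λ p ∈ span{C, S}` for all support vectors `p`. -/
theorem stmt_11 (α : Fin 4 → ℝ)
    (hsin : ∀ j : Fin 4, Real.sin (α (j + 1) - α j) ≠ 0)
    (C S : Fin 4 → ℝ)
    (hC : ∀ j : Fin 4, C j = Real.cos (α j))
    (hS : ∀ j : Fin 4, S j = Real.sin (α j)) :
    ∃ lam : ℝ, ∀ p : Fin 4 → ℝ,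
      (Pmat 4 α).mulVec ((Pmat 4 α).mulVec p) - lam • p ∈
        Submodule.span ℝ ({C, S} : Set (Fin 4 → ℝ)) := by
  have s0 : Real.sin (α 1 - α 0) ≠ 0 := hsin 0
  have s1 : Real.sin (α 2 - α 1) ≠ 0 := hsin 1
  have s2 : Real.sin (α 3 - α 2) ≠ 0 := hsin 2
  have s3 : Real.sin (α 0 - α 3) ≠ 0 := hsin 3
  have a0 : (0 : Fin 4) - 1 = 3 := by decide
  have a1 : (1 : Fin 4) - 1 = 0 := by decide
  have a2 : (2 : Fin 4) - 1 = 1 := by decide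
  have a3 : (3 : Fin 4) - 1 = 2 := by decide
  have b0 : (0 : Fin 4) + 1 = 1 := by decide
  have b1 : (1 : Fin 4) + 1 = 2 := by decide
  have b2 : (2 : Fin 4) + 1 = 3 := by decide
  have b3 : (3 : Fin 4) + 1 = 0 := by decide
  apply aux_abstract
  · rw [hC, hC, hS, hS]
    rw [Real.sin_sub] at s0
    intro h
    apply s0
    linear_combination h
  · intro j
    rw [hC, hC, hC, hC, hS]
    fin_cases j
    · have := aux_cos (α 3) (α 0) (α 1) s3 s0
      simp [Pmat, a0, b0] at this ⊢
      linear_combination this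
    · have := aux_cos (α 0) (α 1) (α 2) s0 s1
      simp [Pmat, a1, b1] at this ⊢
      linear_combination this
    · have := aux_cos (α 1) (α 2) (α 3) s1 s2
      simp [Pmat, a2, b2] at this ⊢
      linear_combination this
    · have := aux_cos (α 2) (α 3) (α 0) s2 s3
      simp [Pmat, a3, b3] at this ⊢
      linear_combination this
  · intro j
    rw [hS, hS, hS, hS, hC]
    fin_cases j
    · have := aux_sin (α 3) (α 0) (α 1) s3 s0
      simp [Pmat, a0, b0] at this ⊢
      linear_combination this
    · have := aux_sin (α 0) (α 1) (α 2) s0 s1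
      simp [Pmat, a1, b1] at this ⊢
      linear_combination this
    · have := aux_sin (α 1) (α 2) (α 3) s1 s2
      simp [Pmat, a2, b2] at this ⊢
      linear_combination this
    · have := aux_sin (α 2) (α 3) (α 0) s2 s3
      simp [Pmat, a3, b3] at this ⊢
      linear_combination this
  · simp only [Pmat, Matrix.of_apply, if_true, a0, a1, a2, a3, b0, b1, b2, b3]
    ring
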